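/- In the line network with n hops, message set of size M = 2^{NR}, per-node power constraint P_0, and per-link Gaussian noise variances σ_i² ≥ σ_0² > 0, for any choice of rate-R length-N codes at nodes 0,...,n−1 and decision rules at nodes 1,...,n, the end-to-end mutual information satisfies I(W; Ŵ_n) ≤ NR·[1 − M·Q(((M−1)/M)·Ω_0, N, P_0/σ_0²)]^n. -/

import Mathlib

open MeasureTheory ProbabilityTheory

/-- The inverse cotangent with range `(0, π)` (continuous decreasing branch). -/
noncomputable def arccot (x : ℝ) : ℝ := Real.pi / 2 - Real.arctan x

/-- `g v` is the solid angle of the right circular cone of half-angle `v` in `ℝ^N`. -/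
noncomputable def g (N : ℕ) (v : ℝ) : ℝ :=
  ((N : ℝ) - 1) * Real.pi ^ (((N : ℝ) - 1) / 2) / Real.Gamma (((N : ℝ) + 1) / 2) *
    ∫ θ in (0 : ℝ)..v, Real.sin θ ^ (N - 2)

/-- The random angle `Φ_γ` as a function of the noise vector of `N` i.i.d. standard
Gaussians. -/
noncomputable def Phi (N : ℕ) [NeZero N] (γ : ℝ) (z : Fin N → ℝ) : ℝ :=
  if 0 < ∑ l ∈ Finset.univ.erase (0 : Fin N), z l ^ 2 then
    arccot ((Real.sqrt (N * γ) + z 0) /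
      Real.sqrt (∑ l ∈ Finset.univ.erase (0 : Fin N), z l ^ 2))
  else 0

/-- Shannon's `Q(x, N, γ) = Pr[g(Φ_γ) ≥ x]`: the probability that a unit-variance
Gaussian perturbation displaces a signal point at squared norm `Nγ` outside the right
circular cone of solid angle `x` centered at the signal direction. -/
noncomputable def Qfun (x : ℝ) (N : ℕ) [NeZero N] (γ : ℝ) : ℝ :=
  ((Measure.pi fun _ : Fin N => gaussianReal 0 1) {z | x ≤ g N (Phi N γ z)}).toReal

/-- The transition matrix of one hop: node transmits codeword `enc j`, AWGN with
variance `σ2` per dimension is added, and the receiver decides via `dec`. -/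
noncomputable def hopMatrix {N M : ℕ} (enc : Fin M → Fin N → ℝ)
    (dec : (Fin N → ℝ) → Fin M) (σ2 : NNReal) : Matrix (Fin M) (Fin M) ℝ :=
  fun j k =>
    ((Measure.pi fun _ : Fin N => gaussianReal 0 σ2)
      {z | dec (fun t => enc j t + z t) = k}).toReal

/-- Shannon mutual information between an input with distribution `p` and the output of
the channel with transition matrix `Q` (convention `Real.log 0 = 0`). -/
noncomputable def mutualInfo {M : ℕ} (p : Fin M → ℝ) (Q : Matrix (Fin M) (Fin M) ℝ) : ℝ :=
  ∑ j, ∑ k, p j * Q j k * Real.log (Q j k / ∑ j', p j' * Q j' k)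

/-!
Decoding errors contract information. If every row of a transition matrix `A` dominates a common
measure `m`, the log-sum inequality shows that passing two distributions through `A` multiplies
their relative entropy by at most `1 - ∑ k, m k`; taking for `m` the column minima, a hop
multiplies the mutual information by at most one minus its Doeblin coefficient. Over `n` hops the
factors multiply, starting from the entropy of the input, which is at most `log M`.

For a Gaussian hop, the Doeblin coefficient is a sum `∑ k, P(decide k | x k)` for some choice of
codewords `x k` in the ball of squared radius `N * P₀`. Shannon's cone-packing argument bounds it
below. Let the cone around `x k` have solid angle `(M - 1) / M * Ω₀`, so that its complement
occupies a fraction `1 / M` of every sphere about the origin. Moving `x k` outwards to the full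
radius only lowers the output density on that complement. Since the `M` decision regions cover the
space while the `M` complements have total angle `Ω₀`, an exchange argument shows that
the sum is at least its value in the ideal case where each decision region is the complement of
its cone, which is `M * Q`.
-/

open scoped Matrix ENNReal

section RelativeEntropy

variable {ι κ : Type*} [Fintype ι]

/-- The relative entropy `D(a‖b)`, in nats, of two weight vectors on a finite type. A term with
`b i = 0` contributes `0`, so the value is meaningful only when `b i = 0` forces `a i = 0`. -/
noncomputable def relEntropy (a b : ι → ℝ) : ℝ := ∑ i, a i * Real.log (a i / b i)

lemma mul_log_add_sub_le_mul_log_div {a b r : ℝ} (ha : 0 ≤ a) (hb : 0 ≤ b)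
    (hab : b = 0 → a = 0) (hr : 0 < r) :
    a * Real.log r + (a - b * r) ≤ a * Real.log (a / b) := by
  rcases ha.eq_or_lt with rfl | ha
  · simpa using mul_nonneg hb hr.le
  have hb : 0 < b := hb.lt_of_ne fun h => ha.ne' (hab h.symm)
  have tangent := Real.one_sub_inv_le_log_of_pos (show 0 < a / b / r by positivity)
  rw [Real.log_div (by positivity) hr.ne'] at tangent
  calc a * Real.log r + (a - b * r) = a * (Real.log r + (1 - (a / b / r)⁻¹)) := by field_simp
    _ ≤ a * Real.log (a / b) := by gcongr; linarith

theorem sum_mul_log_sum_div_sum_le_relEntropy {a b : ι → ℝ} (ha : ∀ i, 0 ≤ a i)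
    (hb : ∀ i, 0 ≤ b i) (hab : ∀ i, b i = 0 → a i = 0) :
    (∑ i, a i) * Real.log ((∑ i, a i) / ∑ i, b i) ≤ relEntropy a b := by
  rcases (Finset.sum_nonneg fun i _ => ha i : 0 ≤ ∑ i, a i).eq_or_lt with hA | hA
  · have ha0 := (Fintype.sum_eq_zero_iff_of_nonneg ha).1 hA.symm
    simp [relEntropy, ha0]
  have hB : 0 < ∑ i, b i := by
    refine (Finset.sum_nonneg fun i _ => hb i).lt_of_ne fun hB => hA.ne' ?_
    have hb0 := (Fintype.sum_eq_zero_iff_of_nonneg hb).1 hB.symm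
    exact Finset.sum_eq_zero fun i _ => hab i (congrFun hb0 i)
  set r := (∑ i, a i) / ∑ i, b i with hr
  calc (∑ i, a i) * Real.log r = ∑ i, (a i * Real.log r + (a i - b i * r)) := by
        rw [Finset.sum_add_distrib, Finset.sum_sub_distrib, ← Finset.sum_mul, ← Finset.sum_mul,
          hr, mul_div_cancel₀ _ hB.ne', sub_self, add_zero]
    _ ≤ relEntropy a b := Finset.sum_le_sum fun i _ =>
        mul_log_add_sub_le_mul_log_div (ha i) (hb i) (hab i) (div_pos hA hB)

lemma relEntropy_nonneg {a b : ι → ℝ} (ha : ∀ i, 0 ≤ a i) (hb : ∀ i, 0 ≤ b i)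
    (hab : ∀ i, b i = 0 → a i = 0) (hsum : ∑ i, a i = ∑ i, b i) : 0 ≤ relEntropy a b := by
  refine le_of_eq_of_le ?_ (sum_mul_log_sum_div_sum_le_relEntropy ha hb hab)
  rcases eq_or_ne (∑ i, b i) 0 with h | h <;> simp [hsum, h]

lemma vecMul_apply_eq_add_sum_mul_sub {a : ι → ℝ} (ha : ∑ i, a i = 1) (A : Matrix ι κ ℝ)
    (m : κ → ℝ) (k : κ) : (a ᵥ* A) k = m k + ∑ l, a l * (A l k - m k) := by
  simp only [Matrix.vecMul, dotProduct, mul_sub, Finset.sum_sub_distrib, ← Finset.sum_mul, ha]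
  ring

/- Log-sum inequality over `Option ι`: the common part `m` of the two outputs is the extra summand,
and it has logarithmic ratio `log 1 = 0`. -/
lemma vecMul_mul_log_div_le {a b : ι → ℝ} {A : Matrix ι κ ℝ} {m : κ → ℝ} (ha : ∀ i, 0 ≤ a i)
    (hb : ∀ i, 0 ≤ b i) (hab : ∀ i, b i = 0 → a i = 0) (ha1 : ∑ i, a i = 1) (hb1 : ∑ i, b i = 1)
    (hm : ∀ k, 0 ≤ m k) (hmA : ∀ l k, m k ≤ A l k) (k : κ) :
    (a ᵥ* A) k * Real.log ((a ᵥ* A) k / (b ᵥ* A) k) ≤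
      ∑ l, a l * Real.log (a l / b l) * (A l k - m k) := by
  have hB : ∀ l, 0 ≤ A l k - m k := fun l => sub_nonneg.2 (hmA l k)
  have logSum := sum_mul_log_sum_div_sum_le_relEntropy
    (a := fun o : Option ι => o.elim (m k) fun l => a l * (A l k - m k))
    (b := fun o : Option ι => o.elim (m k) fun l => b l * (A l k - m k))
    (Option.rec (hm k) fun l => mul_nonneg (ha l) (hB l))
    (Option.rec (hm k) fun l => mul_nonneg (hb l) (hB l))
    (Option.rec id fun l h => by
      rcases mul_eq_zero.1 h with h | h
      · simp [hab l h]
      · simp [h])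
  simp only [relEntropy, Fintype.sum_option, Option.elim] at logSum
  rw [vecMul_apply_eq_add_sum_mul_sub ha1 A m, vecMul_apply_eq_add_sum_mul_sub hb1 A m]
  refine logSum.trans_eq ?_
  have common_part : m k * Real.log (m k / m k) = 0 := by
    rcases eq_or_ne (m k) 0 with h | h <;> simp [h]
  rw [common_part, zero_add]
  refine Finset.sum_congr rfl fun l _ => ?_
  rcases eq_or_ne (A l k - m k) 0 with h | h
  · simp [h]
  · rw [mul_div_mul_right _ _ h]
    ring

theorem relEntropy_vecMul_le [Fintype κ] {a b : ι → ℝ} {A : Matrix ι κ ℝ} {m : κ → ℝ}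
    (ha : ∀ i, 0 ≤ a i) (hb : ∀ i, 0 ≤ b i) (hab : ∀ i, b i = 0 → a i = 0)
    (ha1 : ∑ i, a i = 1) (hb1 : ∑ i, b i = 1) (hm : ∀ k, 0 ≤ m k) (hmA : ∀ l k, m k ≤ A l k)
    (hA : ∀ l, ∑ k, A l k = 1) :
    relEntropy (a ᵥ* A) (b ᵥ* A) ≤ (1 - ∑ k, m k) * relEntropy a b :=
  calc relEntropy (a ᵥ* A) (b ᵥ* A)
      ≤ ∑ k, ∑ l, a l * Real.log (a l / b l) * (A l k - m k) :=
        Finset.sum_le_sum fun k _ => vecMul_mul_log_div_le ha hb hab ha1 hb1 hm hmA k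
    _ = (1 - ∑ k, m k) * relEntropy a b := by
        rw [Finset.sum_comm, relEntropy, Finset.mul_sum]
        refine Finset.sum_congr rfl fun l _ => ?_
        rw [← Finset.mul_sum, Finset.sum_sub_distrib, hA, mul_comm]

end RelativeEntropy

section DoeblinCoefficient

variable {ι κ : Type*} [Fintype κ]

/-- The Doeblin coefficient of a transition matrix: the total mass of the column minima, that is,
of the largest measure lying below every row. -/
noncomputable def doeblinCoeff (A : Matrix ι κ ℝ) : ℝ := ∑ k, ⨅ j, A j k

lemma exists_sum_apply_eq_doeblinCoeff [Finite ι] [Nonempty ι] (A : Matrix ι κ ℝ) :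
    ∃ f : κ → ι, ∑ k, A (f k) k = doeblinCoeff A := by
  choose f hf using fun k => exists_eq_ciInf_of_finite (f := fun j => A j k)
  exact ⟨f, Finset.sum_congr rfl fun k _ => hf k⟩

lemma doeblinCoeff_le_one [Finite ι] [Nonempty ι] {A : Matrix ι κ ℝ} (hA : ∀ j, ∑ k, A j k = 1) :
    doeblinCoeff A ≤ 1 := by
  obtain ⟨j⟩ := ‹Nonempty ι›
  exact (Finset.sum_le_sum fun k _ => ciInf_le (Set.finite_range _).bddBelow j).trans_eq (hA j)

end DoeblinCoefficient

section MutualInformation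

variable {M : ℕ} {p : Fin M → ℝ} {P A : Matrix (Fin M) (Fin M) ℝ}

lemma mutualInfo_eq_sum_relEntropy (p : Fin M → ℝ) (P : Matrix (Fin M) (Fin M) ℝ) :
    mutualInfo p P = ∑ j, p j * relEntropy (P j) (p ᵥ* P) := by
  simp only [mutualInfo, relEntropy, Finset.mul_sum, mul_assoc, Matrix.vecMul, dotProduct]

lemma sum_vecMul (hp : ∑ j, p j = 1) (hP : P ∈ Matrix.rowStochastic ℝ (Fin M)) :
    ∑ k, (p ᵥ* P) k = 1 := by
  have := Matrix.vecMul_dotProduct_one_eq_one_rowStochastic hP (x := p) (by simpa [dotProduct])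
  simpa [dotProduct] using this

lemma apply_eq_zero_of_vecMul_eq_zero (hp : ∀ j, 0 ≤ p j)
    (hP : P ∈ Matrix.rowStochastic ℝ (Fin M)) {j k : Fin M} (hj : 0 < p j)
    (hk : (p ᵥ* P) k = 0) : P j k = 0 := by
  have hterm := congrFun ((Fintype.sum_eq_zero_iff_of_nonneg fun l =>
    mul_nonneg (hp l) (Matrix.nonneg_of_mem_rowStochastic hP)).1 hk) j
  exact (mul_eq_zero.1 hterm).resolve_left hj.ne'

lemma mutualInfo_nonneg (hp0 : ∀ j, 0 ≤ p j) (hp1 : ∑ j, p j = 1)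
    (hP : P ∈ Matrix.rowStochastic ℝ (Fin M)) : 0 ≤ mutualInfo p P := by
  rw [mutualInfo_eq_sum_relEntropy]
  refine Finset.sum_nonneg fun j _ => ?_
  rcases (hp0 j).eq_or_lt with hj | hj
  · simp [← hj]
  refine mul_nonneg hj.le (relEntropy_nonneg (fun k => Matrix.nonneg_of_mem_rowStochastic hP)
    (Matrix.nonneg_vecMul_of_mem_rowStochastic hP hp0)
    (fun k => apply_eq_zero_of_vecMul_eq_zero hp0 hP hj) ?_)
  rw [Matrix.sum_row_of_mem_rowStochastic hP, sum_vecMul hp1 hP]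

theorem mutualInfo_mul_le (hp0 : ∀ j, 0 ≤ p j) (hp1 : ∑ j, p j = 1)
    (hP : P ∈ Matrix.rowStochastic ℝ (Fin M)) (hA : A ∈ Matrix.rowStochastic ℝ (Fin M)) :
    mutualInfo p (P * A) ≤ (1 - doeblinCoeff A) * mutualInfo p P := by
  simp only [mutualInfo_eq_sum_relEntropy, Finset.mul_sum]
  refine Finset.sum_le_sum fun j _ => ?_
  rcases (hp0 j).eq_or_lt with hj | hj
  · simp [← hj]
  rw [mul_left_comm, ← Matrix.vecMul_vecMul]
  refine mul_le_mul_of_nonneg_left ?_ hj.le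
  exact relEntropy_vecMul_le (fun k => Matrix.nonneg_of_mem_rowStochastic hP)
    (Matrix.nonneg_vecMul_of_mem_rowStochastic hP hp0)
    (fun k => apply_eq_zero_of_vecMul_eq_zero hp0 hP hj)
    (Matrix.sum_row_of_mem_rowStochastic hP j) (sum_vecMul hp1 hP)
    (fun k => Real.iInf_nonneg fun l => Matrix.nonneg_of_mem_rowStochastic hA)
    (fun l k => ciInf_le (Set.finite_range _).bddBelow l)
    (Matrix.sum_row_of_mem_rowStochastic hA)

lemma mutualInfo_one_le_log (hp0 : ∀ j, 0 ≤ p j) (hp1 : ∑ j, p j = 1) :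
    mutualInfo p 1 ≤ Real.log M := by
  have hself : mutualInfo p 1 = -relEntropy p 1 := by
    simp only [mutualInfo_eq_sum_relEntropy, relEntropy, Matrix.vecMul_one, Matrix.one_apply,
      Pi.one_apply, ite_mul, one_mul, zero_mul, Finset.sum_ite_eq, Finset.mem_univ, if_true,
      one_div, div_one, Real.log_inv, mul_neg, Finset.sum_neg_distrib]
  have logSum := sum_mul_log_sum_div_sum_le_relEntropy (b := 1) hp0 (by simp) (by simp)
  simp only [hp1, Pi.one_apply, Finset.sum_const, Finset.card_univ, Fintype.card_fin, nsmul_eq_mul,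
    mul_one, one_mul, one_div, Real.log_inv] at logSum
  linarith

theorem mutualInfo_list_prod_le [NeZero M] (hp0 : ∀ j, 0 ≤ p j) (hp1 : ∑ j, p j = 1) {δ : ℝ}
    (l : List (Matrix (Fin M) (Fin M) ℝ)) (hl : ∀ A ∈ l, A ∈ Matrix.rowStochastic ℝ (Fin M))
    (hδ : ∀ A ∈ l, δ ≤ doeblinCoeff A) :
    mutualInfo p l.prod ≤ (1 - δ) ^ l.length * Real.log M := by
  induction l using List.reverseRecOn with
  | nil => simpa using mutualInfo_one_le_log hp0 hp1
  | append_singleton l A ih =>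
    have hl' : ∀ B ∈ l, B ∈ Matrix.rowStochastic ℝ (Fin M) := fun B hB => hl B (by simp [hB])
    have hA : A ∈ Matrix.rowStochastic ℝ (Fin M) := hl A (by simp)
    have hδA : δ ≤ doeblinCoeff A := hδ A (by simp)
    have hP := Submonoid.list_prod_mem _ hl'
    have hδ1 : δ ≤ 1 := hδA.trans (doeblinCoeff_le_one (Matrix.sum_row_of_mem_rowStochastic hA))
    calc mutualInfo p (l ++ [A]).prod
        ≤ (1 - doeblinCoeff A) * mutualInfo p l.prod := by
          simpa using mutualInfo_mul_le hp0 hp1 hP hA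
      _ ≤ (1 - δ) * mutualInfo p l.prod :=
          mul_le_mul_of_nonneg_right (by linarith) (mutualInfo_nonneg hp0 hp1 hP)
      _ ≤ (1 - δ) * ((1 - δ) ^ l.length * Real.log M) :=
          mul_le_mul_of_nonneg_left (ih hl' fun B hB => hδ B (by simp [hB])) (by linarith)
      _ = (1 - δ) ^ (l ++ [A]).length * Real.log M := by
          rw [List.length_append, List.length_singleton, pow_succ', mul_assoc]

end MutualInformation

section Exchange

variable {α ι : Type*} [Fintype ι] {C : ι → Set α} {κ : α → ι} {v w : ι → α → ℝ≥0∞}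
  {t : α → ℝ≥0∞}

lemma sum_indicator_add_le_add_sum_indicator (hvt : ∀ k, ∀ y ∈ C k, v k y ≤ t y)
    (hvw : ∀ k, ∀ y ∈ C k, v k y ≤ w k y) (htw : ∀ k, ∀ y ∉ C k, t y ≤ w k y) (k : ι) (y : α) :
    ∑ l, (C l).indicator (v l) y + t y ≤ w k y + ∑ l, (C l).indicator t y := by
  classical
  have hle (l : ι) : (C l).indicator (v l) y ≤ (C l).indicator t y :=
    Set.indicator_le_indicator' (hvt l y)
  by_cases hy : y ∈ C k
  · rw [← Finset.add_sum_erase _ _ (Finset.mem_univ k),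
      ← Finset.add_sum_erase _ (fun l => (C l).indicator t y) (Finset.mem_univ k),
      Set.indicator_of_mem hy, Set.indicator_of_mem hy, add_assoc, add_comm _ (t y)]
    exact add_le_add (hvw k y hy) (add_le_add_right (Finset.sum_le_sum fun l _ => hle l) _)
  · rw [add_comm]
    exact add_le_add (htw k y hy) (Finset.sum_le_sum fun l _ => hle l)

variable [MeasurableSpace α] {μ : Measure α}

/- The bathtub principle: exchanging `C k` for the cell `κ ⁻¹' {k}` loses density at most `t` on the
points removed and gains at least `t` on the points added, and the cells, which partition the space,
have at least as much `t`-mass as the sets `C k` together. -/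
theorem sum_setLIntegral_le_sum_setLIntegral_preimage [MeasurableSpace ι]
    [MeasurableSingletonClass ι] (hC : ∀ k, MeasurableSet (C k)) (hκ : Measurable κ)
    (hv : ∀ k, Measurable (v k)) (hw : ∀ k, Measurable (w k)) (ht : Measurable t)
    (ht_top : ∫⁻ y, t y ∂μ ≠ ∞) (hvt : ∀ k, ∀ y ∈ C k, v k y ≤ t y)
    (hvw : ∀ k, ∀ y ∈ C k, v k y ≤ w k y) (htw : ∀ k, ∀ y ∉ C k, t y ≤ w k y)
    (hbudget : ∑ k, ∫⁻ y in C k, t y ∂μ ≤ ∫⁻ y, t y ∂μ) :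
    ∑ k, ∫⁻ y in C k, v k y ∂μ ≤ ∑ k, ∫⁻ y in κ ⁻¹' {k}, w k y ∂μ := by
  have hcell (k : ι) : MeasurableSet (κ ⁻¹' {k}) := hκ (measurableSet_singleton k)
  have pointwise (y : α) : ∑ k, (C k).indicator (v k) y + t y ≤
      ∑ k, (κ ⁻¹' {k}).indicator (w k) y + ∑ k, (C k).indicator t y := by
    refine (sum_indicator_add_le_add_sum_indicator hvt hvw htw (κ y) y).trans ?_
    gcongr
    refine le_trans ?_ (Finset.single_le_sum (fun _ _ => zero_le) (Finset.mem_univ (κ y)))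
    rw [Set.indicator_of_mem (by rfl : y ∈ κ ⁻¹' {κ y})]
  have integrated := lintegral_mono (μ := μ) pointwise
  rw [lintegral_add_right _ ht, lintegral_finsetSum _ fun k _ => (hv k).indicator (hC k),
    lintegral_add_left (Finset.measurable_fun_sum _ fun k _ => (hw k).indicator (hcell k)),
    lintegral_finsetSum _ fun k _ => (hw k).indicator (hcell k),
    lintegral_finsetSum _ fun k _ => ht.indicator (hC k)] at integrated
  simp_rw [lintegral_indicator (hC _), lintegral_indicator (hcell _)] at integrated
  exact (ENNReal.add_le_add_iff_right ht_top).1 (integrated.trans (by gcongr))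

end Exchange

section Cone

variable {E : Type*} [NormedAddCommGroup E] [InnerProductSpace ℝ E]

/-- The complement of the open circular cone with axis `u` and half-angle `arccos c`, for a unit
vector `u`. -/
def farCone (u : E) (c : ℝ) : Set E := {y | inner ℝ u y ≤ c * ‖y‖}

lemma farCone_one {u : E} (hu : ‖u‖ = 1) : farCone u 1 = Set.univ :=
  Set.eq_univ_of_forall fun y => (real_inner_le_norm u y).trans_eq (by rw [hu])

lemma norm_sub_smul_sq {u : E} (hu : ‖u‖ = 1) (b : ℝ) (y : E) :
    ‖y - b • u‖ ^ 2 = ‖y‖ ^ 2 - 2 * b * inner ℝ u y + b ^ 2 := by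
  rw [norm_sub_sq_real, inner_smul_right, norm_smul, hu, real_inner_comm, mul_one,
    Real.norm_eq_abs, sq_abs]
  ring

lemma exists_norm_eq_one_and_eq_norm_smul {e : E} (he : ‖e‖ = 1) (x : E) :
    ∃ u : E, ‖u‖ = 1 ∧ x = ‖x‖ • u := by
  rcases eq_or_ne x 0 with rfl | hx
  · exact ⟨e, he, by simp⟩
  · exact ⟨‖x‖⁻¹ • x, norm_smul_inv_norm hx, (smul_inv_smul₀ (norm_ne_zero_iff.2 hx) x).symm⟩

variable {u y : E} {a b c : ℝ}

lemma sq_norm_sub_le_norm_sub_smul_sq_of_mem_farCone (hu : ‖u‖ = 1) (ha : 0 ≤ a)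
    (hy : y ∈ farCone u c) : ‖y‖ ^ 2 - 2 * a * c * ‖y‖ + a ^ 2 ≤ ‖y - a • u‖ ^ 2 := by
  rw [norm_sub_smul_sq hu]
  linarith [mul_le_mul_of_nonneg_left (show inner ℝ u y ≤ c * ‖y‖ from hy) ha]

lemma norm_sub_smul_sq_le_norm_sub_smul_sq_of_mem_farCone (hu : ‖u‖ = 1) (hc : c ≤ 0)
    (hb : 0 ≤ b) (hba : b ≤ a) (hy : y ∈ farCone u c) : ‖y - b • u‖ ^ 2 ≤ ‖y - a • u‖ ^ 2 := by
  have hinner : inner ℝ u y ≤ 0 :=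
    hy.trans (mul_nonpos_of_nonpos_of_nonneg hc (norm_nonneg y))
  rw [norm_sub_smul_sq hu, norm_sub_smul_sq hu]
  nlinarith

lemma norm_sub_smul_sq_le_sq_norm_sub_of_notMem_farCone (hu : ‖u‖ = 1) (hc : c ≤ 0) (hb : 0 ≤ b)
    (hba : b ≤ a) (hy : y ∉ farCone u c) :
    ‖y - b • u‖ ^ 2 ≤ ‖y‖ ^ 2 - 2 * a * c * ‖y‖ + a ^ 2 := by
  have hinner : c * ‖y‖ ≤ inner ℝ u y := (not_le.1 hy).le
  have hcy : c * ‖y‖ ≤ 0 := mul_nonpos_of_nonpos_of_nonneg hc (norm_nonneg y)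
  rw [norm_sub_smul_sq hu]
  nlinarith [mul_le_mul_of_nonneg_left hinner hb, mul_le_mul_of_nonpos_right hba hcy]

variable [MeasurableSpace E] [BorelSpace E]

lemma measurableSet_farCone [SecondCountableTopology E] (u : E) (c : ℝ) :
    MeasurableSet (farCone u c) :=
  measurableSet_le (by fun_prop) (by fun_prop)

variable [FiniteDimensional ℝ E]

lemma setLIntegral_farCone_eq {u v : E} (h : ‖u‖ = ‖v‖) (c : ℝ) (H : ℝ → ℝ → ℝ≥0∞) :
    ∫⁻ y in farCone u c, H ‖y‖ (inner ℝ u y) = ∫⁻ y in farCone v c, H ‖y‖ (inner ℝ v y) := by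
  let L : E ≃ₗᵢ[ℝ] E := (Submodule.span ℝ {u - v})ᗮ.reflection
  have hL (y : E) : inner ℝ v (L y) = inner ℝ u y := by
    rw [← L.inner_map_map u y, show L u = v from Submodule.reflection_sub h]
  have key := L.measurePreserving.setLIntegral_comp_preimage_emb
    L.toHomeomorph.measurableEmbedding (fun y => H ‖y‖ (inner ℝ v y)) (farCone v c)
  have hpre : L ⁻¹' farCone v c = farCone u c := by
    ext y
    simp only [farCone, Set.mem_preimage, Set.mem_ofPred_eq, L.norm_map, hL]
  simpa only [hpre, L.norm_map, hL] using key

/- Shannon's cone-packing bound. The threshold `T ‖y‖` is the value of the density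
`f (‖y - a • u k‖ ^ 2)` on the boundary of the `k`-th cone. -/
theorem card_mul_setLIntegral_farCone_le_sum {ι : Type*} [Fintype ι] [MeasurableSpace ι]
    [MeasurableSingletonClass ι] {f : ℝ → ℝ≥0∞} (hf : Antitone f)
    (hf_top : ∫⁻ y : E, f (‖y‖ ^ 2) ≠ ∞) {e : E} (he : ‖e‖ = 1) {a c : ℝ} (ha : 0 ≤ a) (hc : c ≤ 0)
    (hfrac : ∀ T : ℝ → ℝ≥0∞, Measurable T →
      Fintype.card ι * ∫⁻ y in farCone e c, T ‖y‖ ≤ ∫⁻ y : E, T ‖y‖)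
    {x : ι → E} (hx : ∀ k, ‖x k‖ ≤ a) {κ : E → ι} (hκ : Measurable κ) :
    Fintype.card ι * ∫⁻ y in farCone e c, f (‖y - a • e‖ ^ 2) ≤
      ∑ k, ∫⁻ y in κ ⁻¹' {k}, f (‖y - x k‖ ^ 2) := by
  choose u hu hxu using fun k => exists_norm_eq_one_and_eq_norm_smul he (x k)
  have hfm : Measurable f := hf.measurable
  let T (r : ℝ) : ℝ≥0∞ := f (r ^ 2 - 2 * a * c * r + a ^ 2)
  have hT : Measurable T := by fun_prop
  have hT_top : ∫⁻ y : E, T ‖y‖ ≠ ∞ := by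
    refine ne_top_of_le_ne_top hf_top (lintegral_mono fun y => hf ?_)
    nlinarith [mul_nonneg ha (norm_nonneg y)]
  have hbudget : ∑ k, ∫⁻ y in farCone (u k) c, T ‖y‖ ≤ ∫⁻ y : E, T ‖y‖ := by
    simp_rw [fun k => setLIntegral_farCone_eq ((hu k).trans he.symm) c fun r _ => T r]
    simpa using hfrac T hT
  have hrot (k : ι) : ∫⁻ y in farCone (u k) c, f (‖y - a • u k‖ ^ 2) =
      ∫⁻ y in farCone e c, f (‖y - a • e‖ ^ 2) := by
    simpa only [norm_sub_smul_sq (hu k), norm_sub_smul_sq he] using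
      setLIntegral_farCone_eq ((hu k).trans he.symm) c fun r s => f (r ^ 2 - 2 * a * s + a ^ 2)
  have exchange := sum_setLIntegral_le_sum_setLIntegral_preimage (μ := volume)
    (C := fun k => farCone (u k) c) (v := fun k y => f (‖y - a • u k‖ ^ 2))
    (w := fun k y => f (‖y - x k‖ ^ 2)) (t := fun y => T ‖y‖)
    (fun k => measurableSet_farCone (u k) c) hκ (fun k => by fun_prop) (fun k => by fun_prop)
    (by fun_prop) hT_top
    (fun k y hy => hf (sq_norm_sub_le_norm_sub_smul_sq_of_mem_farCone (hu k) ha hy))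
    (fun k y hy => hf <| by
      conv_lhs => rw [hxu k]
      exact norm_sub_smul_sq_le_norm_sub_smul_sq_of_mem_farCone (hu k) hc (norm_nonneg _) (hx k) hy)
    (fun k y hy => hf <| by
      conv_lhs => rw [hxu k]
      exact norm_sub_smul_sq_le_sq_norm_sub_of_notMem_farCone (hu k) hc (norm_nonneg _) (hx k) hy)
    hbudget
  simpa [hrot] using exchange

end Cone

section Polar

lemma lintegral_fun_norm_addHaar {E : Type*} [NormedAddCommGroup E] [NormedSpace ℝ E]
    [FiniteDimensional ℝ E] [Nontrivial E] [MeasurableSpace E] [BorelSpace E] (μ : Measure E)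
    [μ.IsAddHaarMeasure] {f : ℝ → ℝ≥0∞} (hf : Measurable f) :
    ∫⁻ x, f ‖x‖ ∂μ = μ.toSphere Set.univ *
      ∫⁻ s in Set.Ioi (0 : ℝ), ENNReal.ofReal (s ^ (Module.finrank ℝ E - 1)) * f s :=
  calc ∫⁻ x, f ‖x‖ ∂μ
      = ∫⁻ x : ({0}ᶜ : Set E), f ‖x.1‖ ∂(μ.comap (↑)) := by
        rw [lintegral_subtype_comap (measurableSet_singleton _).compl fun x => f ‖x‖,
          restrict_compl_singleton]
    _ = ∫⁻ x, f x.2 ∂μ.toSphere.prod (.volumeIoiPow (Module.finrank ℝ E - 1)) := by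
        simpa using μ.measurePreserving_homeomorphUnitSphereProd.lintegral_comp_emb
          (Homeomorph.measurableEmbedding _) (f ∘ Subtype.val ∘ Prod.snd)
    _ = μ.toSphere Set.univ *
          ∫⁻ s : Set.Ioi (0 : ℝ), f s ∂.volumeIoiPow (Module.finrank ℝ E - 1) := by
        rw [lintegral_prod _ (by fun_prop)]
        simp [mul_comm]
    _ = μ.toSphere Set.univ *
          ∫⁻ s in Set.Ioi (0 : ℝ), ENNReal.ofReal (s ^ (Module.finrank ℝ E - 1)) * f s := by
        rw [Measure.volumeIoiPow, lintegral_withDensity_eq_lintegral_mul _ (by fun_prop)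
          (by fun_prop)]
        exact congrArg _ (lintegral_subtype_comap measurableSet_Ioi
          fun s : ℝ => ENNReal.ofReal (s ^ (Module.finrank ℝ E - 1)) * f s)

lemma measurePreserving_head_tail (n : ℕ) :
    MeasurePreserving (fun y : EuclideanSpace ℝ (Fin (n + 1)) =>
      (y 0, (WithLp.toLp 2 (Fin.tail y.ofLp) : EuclideanSpace ℝ (Fin n)))) :=
  ((MeasurePreserving.id volume).prod (PiLp.volume_preserving_toLp (Fin n))).comp <|
    (volume_preserving_piFinSuccAbove (fun _ : Fin (n + 1) => ℝ) 0).comp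
      (PiLp.volume_preserving_ofLp (Fin (n + 1)))

lemma lintegral_head_norm_tail (n : ℕ) {F : ℝ × ℝ → ℝ≥0∞} (hF : Measurable F) :
    ∫⁻ y : EuclideanSpace ℝ (Fin (n + 2)),
        F (y 0, ‖(WithLp.toLp 2 (Fin.tail y.ofLp) : EuclideanSpace ℝ (Fin (n + 1)))‖) =
      (volume : Measure (EuclideanSpace ℝ (Fin (n + 1)))).toSphere Set.univ *
        ∫⁻ p in Set.univ ×ˢ Set.Ioi 0, ENNReal.ofReal (p.2 ^ n) * F p := by
  rw [(measurePreserving_head_tail (n + 1)).lintegral_comp (f := fun p => F (p.1, ‖p.2‖))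
    (by fun_prop), Measure.volume_eq_prod, lintegral_prod _ (by fun_prop), Measure.volume_eq_prod,
    ← Measure.prod_restrict, Measure.restrict_univ, lintegral_prod _ (by fun_prop),
    ← lintegral_const_mul _ (Measurable.lintegral_prod_right' (f := fun p : ℝ × ℝ =>
      ENNReal.ofReal (p.2 ^ n) * F p) (by fun_prop))]
  refine lintegral_congr fun a => ?_
  simpa using lintegral_fun_norm_addHaar
    (volume : Measure (EuclideanSpace ℝ (Fin (n + 1)))) (f := fun s => F (a, s)) (by fun_prop)

lemma sin_pos_iff_of_mem_Ioo {θ : ℝ} (hθ : θ ∈ Set.Ioo (-Real.pi) Real.pi) :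
    0 < Real.sin θ ↔ 0 < θ := by
  refine ⟨fun h => ?_, fun h => Real.sin_pos_of_pos_of_lt_pi h hθ.2⟩
  by_contra! h0
  exact h.not_ge (Real.sin_nonpos_of_nonpos_of_neg_pi_le h0 hθ.1.le)

lemma setLIntegral_upperHalfPlane_eq_polar (f : ℝ × ℝ → ℝ≥0∞) :
    ∫⁻ p in Set.univ ×ˢ Set.Ioi 0, f p =
      ∫⁻ q in Set.Ioi 0 ×ˢ Set.Ioo 0 Real.pi,
        ENNReal.ofReal q.1 * f (q.1 * Real.cos q.2, q.1 * Real.sin q.2) := by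
  have hU : MeasurableSet (Set.Ioi (0 : ℝ) ×ˢ Set.Ioo 0 Real.pi) :=
    measurableSet_Ioi.prod measurableSet_Ioo
  have htarget : Set.Ioi (0 : ℝ) ×ˢ Set.Ioo 0 Real.pi ⊆ polarCoord.target :=
    Set.prod_mono_right (Set.Ioo_subset_Ioo_left (neg_nonpos.2 Real.pi_pos.le))
  rw [← lintegral_indicator (MeasurableSet.univ.prod measurableSet_Ioi),
    ← lintegral_comp_polarCoord_symm, ← Set.inter_eq_left.2 htarget, ← setLIntegral_indicator hU]
  refine setLIntegral_congr_fun polarCoord.open_target.measurableSet fun q hq => ?_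
  have hmem : (q.1 * Real.cos q.2, q.1 * Real.sin q.2) ∈ Set.univ ×ˢ Set.Ioi (0 : ℝ) ↔
      q ∈ Set.Ioi (0 : ℝ) ×ˢ Set.Ioo 0 Real.pi := by
    simp only [Set.mem_prod, Set.mem_univ, true_and, Set.mem_Ioi, Set.mem_Ioo,
      mul_pos_iff_of_pos_left (show 0 < q.1 from hq.1), sin_pos_iff_of_mem_Ioo hq.2,
      show 0 < q.1 from hq.1, show q.2 < Real.pi from hq.2.2, and_true]
  simp only [Set.indicator_apply, polarCoord_symm_apply, hmem, smul_eq_mul, mul_ite, mul_zero]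

lemma inner_single_zero_one {N : ℕ} [NeZero N] (y : EuclideanSpace ℝ (Fin N)) :
    inner ℝ (EuclideanSpace.single 0 1) y = y 0 := by
  simp [EuclideanSpace.inner_single_left]

lemma norm_eq_sqrt_head_sq_add_norm_tail_sq {n : ℕ} (y : EuclideanSpace ℝ (Fin (n + 1))) :
    ‖y‖ = √(y 0 ^ 2 + ‖(WithLp.toLp 2 (Fin.tail y.ofLp) : EuclideanSpace ℝ (Fin n))‖ ^ 2) := by
  rw [EuclideanSpace.norm_eq, EuclideanSpace.norm_eq,
    Real.sq_sqrt (Finset.sum_nonneg fun i _ => sq_nonneg _), Fin.sum_univ_succ]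
  simp [Fin.tail]

lemma sqrt_polar_sq {r : ℝ} (hr : 0 ≤ r) (θ : ℝ) :
    √((r * Real.cos θ) ^ 2 + (r * Real.sin θ) ^ 2) = r := by
  rw [mul_pow, mul_pow, ← mul_add, Real.cos_sq_add_sin_sq, mul_one, Real.sqrt_sq hr]

lemma setLIntegral_Ioo_inter_Ici_sin_pow (n : ℕ) {φ : ℝ} (hφ : φ ∈ Set.Icc 0 Real.pi) :
    ∫⁻ θ in Set.Ici φ ∩ Set.Ioo 0 Real.pi, ENNReal.ofReal (Real.sin θ ^ n) =
      ENNReal.ofReal (∫ θ in φ..Real.pi, Real.sin θ ^ n) := by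
  have hset : (Set.Ici φ ∩ Set.Ioo 0 Real.pi : Set ℝ) =ᵐ[volume] Set.Ioc φ Real.pi := by
    refine (Ioi_ae_eq_Ici.symm.inter (ae_eq_refl _)).trans (.trans ?_ Ioo_ae_eq_Ioc)
    rw [← Set.Ioi_inter_Iio, ← Set.inter_assoc, Set.Ioi_inter_Ioi, sup_of_le_left hφ.1,
      Set.Ioi_inter_Iio]
    exact ae_eq_refl _
  rw [setLIntegral_congr hset, intervalIntegral.integral_of_le hφ.2,
    ofReal_integral_eq_lintegral_ofReal
      ((by fun_prop : Continuous fun θ => Real.sin θ ^ n).integrableOn_Ioc)]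
  refine (ae_restrict_mem measurableSet_Ioc).mono fun θ hθ => ?_
  exact pow_nonneg (Real.sin_nonneg_of_nonneg_of_le_pi (hφ.1.trans hθ.1.le) hθ.2) n

theorem setLIntegral_farCone_cos (n : ℕ) {T : ℝ → ℝ≥0∞} (hT : Measurable T) {φ : ℝ}
    (hφ : φ ∈ Set.Icc 0 Real.pi) :
    ∫⁻ y in farCone (EuclideanSpace.single (0 : Fin (n + 2)) (1 : ℝ)) (Real.cos φ), T ‖y‖ =
      (volume : Measure (EuclideanSpace ℝ (Fin (n + 1)))).toSphere Set.univ *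
        ((∫⁻ r in Set.Ioi (0 : ℝ), ENNReal.ofReal (r ^ (n + 1)) * T r) *
        ENNReal.ofReal (∫ θ in φ..Real.pi, Real.sin θ ^ n)) := by
  let S : Set (ℝ × ℝ) := {p | p.1 ≤ Real.cos φ * √(p.1 ^ 2 + p.2 ^ 2)}
  let F : ℝ × ℝ → ℝ≥0∞ := S.indicator fun p => T √(p.1 ^ 2 + p.2 ^ 2)
  have hS : MeasurableSet S := measurableSet_le (by fun_prop) (by fun_prop)
  have hF : Measurable F := Measurable.indicator (by fun_prop) hS
  have axial (y : EuclideanSpace ℝ (Fin (n + 2))) :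
      (farCone (EuclideanSpace.single 0 1) (Real.cos φ)).indicator (fun y => T ‖y‖) y =
        F (y 0, ‖(WithLp.toLp 2 (Fin.tail y.ofLp) : EuclideanSpace ℝ (Fin (n + 1)))‖) := by
    simp only [F, S, farCone, Set.indicator_apply, Set.mem_ofPred_eq, inner_single_zero_one,
      ← norm_eq_sqrt_head_sq_add_norm_tail_sq y]
  have polar : ∀ q ∈ Set.Ioi (0 : ℝ) ×ˢ Set.Ioo 0 Real.pi,
      ENNReal.ofReal q.1 * (ENNReal.ofReal ((q.1 * Real.sin q.2) ^ n) *
        F (q.1 * Real.cos q.2, q.1 * Real.sin q.2)) =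
      ENNReal.ofReal (q.1 ^ (n + 1)) * T q.1 *
        (Set.Ici φ).indicator (fun θ => ENNReal.ofReal (Real.sin θ ^ n)) q.2 := by
    rintro ⟨r, θ⟩ ⟨hr : 0 < r, hθ⟩
    have hmem : r * Real.cos θ ≤ Real.cos φ * r ↔ φ ≤ θ := by
      rw [mul_comm, mul_le_mul_iff_left₀ hr,
        Real.strictAntiOn_cos.le_iff_ge (Set.Ioo_subset_Icc_self hθ) hφ]
    simp only [F, S, Set.indicator_apply, Set.mem_ofPred_eq, sqrt_polar_sq hr.le, hmem,
      Set.mem_Ici]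
    split_ifs
    · rw [mul_pow, ENNReal.ofReal_mul (by positivity), pow_succ', ENNReal.ofReal_mul hr.le]
      ring
    · simp
  rw [← lintegral_indicator (measurableSet_farCone _ _), lintegral_congr axial,
    lintegral_head_norm_tail n hF, setLIntegral_upperHalfPlane_eq_polar,
    setLIntegral_congr_fun (measurableSet_Ioi.prod measurableSet_Ioo) polar,
    Measure.volume_eq_prod, ← Measure.prod_restrict,
    lintegral_prod_mul (f := fun r : ℝ => ENNReal.ofReal (r ^ (n + 1)) * T r) (by fun_prop)
      (Measurable.indicator (by fun_prop) measurableSet_Ici).aemeasurable,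
    setLIntegral_indicator measurableSet_Ici, setLIntegral_Ioo_inter_Ici_sin_pow n hφ]

end Polar

section SolidAngle

/-- The surface area of the unit sphere of `ℝ^N`, written `Ω₀` in Shannon's bound. -/
noncomputable def unitSphereArea (N : ℕ) : ℝ :=
  2 * Real.pi ^ ((N : ℝ) / 2) / Real.Gamma ((N : ℝ) / 2)

lemma unitSphereArea_pos {N : ℕ} (hN : N ≠ 0) : 0 < unitSphereArea N := by
  have := Real.Gamma_pos_of_pos (show 0 < (N : ℝ) / 2 by positivity)
  unfold unitSphereArea
  positivity

lemma exists_pos_forall_g_eq (n : ℕ) :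
    ∃ K > 0, ∀ v, g (n + 2) v = K * ∫ θ in 0..v, Real.sin θ ^ n := by
  refine ⟨_, ?_, fun v => rfl⟩
  have := Real.Gamma_pos_of_pos (show 0 < (((n + 2 : ℕ) : ℝ) + 1) / 2 by positivity)
  have : 0 < ((n + 2 : ℕ) : ℝ) - 1 := by push_cast; linarith [n.cast_nonneg (α := ℝ)]
  positivity

lemma integral_sin_pow_eq_Gamma_div_Gamma (n : ℕ) :
    ∫ θ in 0..Real.pi, Real.sin θ ^ n =
      √Real.pi * Real.Gamma (((n : ℝ) + 1) / 2) / Real.Gamma ((n : ℝ) / 2 + 1) := by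
  induction n using Nat.twoStepInduction with
  | zero =>
    simp only [pow_zero, integral_one, sub_zero, Nat.cast_zero, zero_add, zero_div,
      Real.Gamma_one_half_eq, Real.Gamma_one, div_one, Real.mul_self_sqrt Real.pi_pos.le]
  | one =>
    have hΓ : Real.Gamma ((1 : ℝ) / 2 + 1) = 1 / 2 * √Real.pi := by
      rw [Real.Gamma_add_one (by norm_num), Real.Gamma_one_half_eq]
    simp only [pow_one, integral_sin, Real.cos_zero, Real.cos_pi, Nat.cast_one, hΓ,
      add_self_div_two, Real.Gamma_one]
    field_simp
    norm_num
  | more n ih _ =>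
    have hnum : (((n + 2 : ℕ) : ℝ) + 1) / 2 = ((n : ℝ) + 1) / 2 + 1 := by push_cast; ring
    have hden : ((n + 2 : ℕ) : ℝ) / 2 + 1 = (n : ℝ) / 2 + 1 + 1 := by push_cast; ring
    rw [integral_sin_pow, ih, hnum, hden,
      Real.Gamma_add_one (s := ((n : ℝ) + 1) / 2) (by positivity),
      Real.Gamma_add_one (s := (n : ℝ) / 2 + 1) (by positivity), Real.sin_zero, Real.sin_pi,
      zero_pow n.succ_ne_zero]
    have := Real.Gamma_pos_of_pos (show 0 < (n : ℝ) / 2 + 1 by positivity)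
    field_simp
    ring

lemma g_pi (n : ℕ) : g (n + 2) Real.pi = unitSphereArea (n + 2) := by
  have h1 : (((n + 2 : ℕ) : ℝ) + 1) / 2 = ((n : ℝ) + 1) / 2 + 1 := by push_cast; ring
  have h2 : ((n + 2 : ℕ) : ℝ) / 2 = (n : ℝ) / 2 + 1 := by push_cast; ring
  have h3 : (((n + 2 : ℕ) : ℝ) - 1) = (n : ℝ) + 1 := by push_cast; ring
  have hpow : Real.pi ^ ((n : ℝ) / 2 + 1) = Real.pi ^ (((n : ℝ) + 1) / 2) * √Real.pi := by
    rw [Real.sqrt_eq_rpow, ← Real.rpow_add Real.pi_pos]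
    ring_nf
  rw [g, unitSphereArea, Nat.add_sub_cancel, integral_sin_pow_eq_Gamma_div_Gamma, h1, h2, h3,
    Real.Gamma_add_one (s := ((n : ℝ) + 1) / 2) (by positivity), hpow]
  have := Real.Gamma_pos_of_pos (show 0 < (n : ℝ) / 2 + 1 by positivity)
  have := Real.Gamma_pos_of_pos (show 0 < ((n : ℝ) + 1) / 2 by positivity)
  field_simp

lemma intervalIntegrable_sin_pow (n : ℕ) (a b : ℝ) :
    IntervalIntegrable (fun θ => Real.sin θ ^ n) volume a b :=
  Continuous.intervalIntegrable (by fun_prop) a b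

lemma strictMonoOn_g (n : ℕ) : StrictMonoOn (g (n + 2)) (Set.Icc 0 Real.pi) := by
  intro a ha b hb hab
  obtain ⟨K, hK, hg⟩ := exists_pos_forall_g_eq n
  have hpos : 0 < ∫ θ in a..b, Real.sin θ ^ n :=
    intervalIntegral.intervalIntegral_pos_of_pos_on (intervalIntegrable_sin_pow n a b)
      (fun θ hθ => pow_pos (Real.sin_pos_of_pos_of_lt_pi (ha.1.trans_lt hθ.1)
        (hθ.2.trans_le hb.2)) n) hab
  rw [hg, hg, ← intervalIntegral.integral_add_adjacent_intervals (intervalIntegrable_sin_pow n 0 a)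
    (intervalIntegrable_sin_pow n a b)]
  gcongr
  linarith

lemma continuous_g (n : ℕ) : Continuous (g (n + 2)) := by
  obtain ⟨K, -, hg⟩ := exists_pos_forall_g_eq n
  rw [funext hg]
  exact (intervalIntegral.continuous_primitive (intervalIntegrable_sin_pow n) 0).const_mul K

lemma two_mul_g_pi_div_two (n : ℕ) : 2 * g (n + 2) (Real.pi / 2) = g (n + 2) Real.pi := by
  obtain ⟨K, -, hg⟩ := exists_pos_forall_g_eq n
  have symmetry : ∫ θ in (Real.pi / 2)..Real.pi, Real.sin θ ^ n =
      ∫ θ in 0..Real.pi / 2, Real.sin θ ^ n := by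
    simpa [sub_half] using (intervalIntegral.integral_comp_sub_left (a := 0) (b := Real.pi / 2)
      (fun θ => Real.sin θ ^ n) Real.pi).symm
  rw [hg, hg, ← intervalIntegral.integral_add_adjacent_intervals
    (intervalIntegrable_sin_pow n 0 (Real.pi / 2))
    (intervalIntegrable_sin_pow n (Real.pi / 2) Real.pi), symmetry]
  ring

lemma exists_g_eq_one_sub_inv_mul (n : ℕ) {M : ℕ} (hM : 2 ≤ M) :
    ∃ φ ∈ Set.Icc (Real.pi / 2) Real.pi,
      g (n + 2) φ = ((M : ℝ) - 1) / M * unitSphereArea (n + 2) := by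
  have hM2 : (2 : ℝ) ≤ M := by exact_mod_cast hM
  have hupper : ((M : ℝ) - 1) / M ≤ 1 := by rw [div_le_one (by positivity)]; linarith
  have hlower : 1 / 2 ≤ ((M : ℝ) - 1) / M := by
    rw [div_le_div_iff₀ two_pos (by positivity)]; linarith
  refine intermediate_value_Icc (by linarith [Real.pi_pos]) (continuous_g n).continuousOn ?_
  have hpos := unitSphereArea_pos (N := n + 2) (by simp)
  have hhalf := two_mul_g_pi_div_two n
  rw [g_pi] at hhalf ⊢
  constructor <;> nlinarith

theorem ofReal_g_pi_mul_setLIntegral_farCone (n : ℕ) {T : ℝ → ℝ≥0∞} (hT : Measurable T) {φ : ℝ}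
    (hφ : φ ∈ Set.Icc 0 Real.pi) :
    ENNReal.ofReal (g (n + 2) Real.pi) *
        ∫⁻ y in farCone (EuclideanSpace.single (0 : Fin (n + 2)) (1 : ℝ)) (Real.cos φ), T ‖y‖ =
      ENNReal.ofReal (g (n + 2) Real.pi - g (n + 2) φ) *
        ∫⁻ y : EuclideanSpace ℝ (Fin (n + 2)), T ‖y‖ := by
  obtain ⟨K, hK, hg⟩ := exists_pos_forall_g_eq n
  have hwhole : ∫⁻ y : EuclideanSpace ℝ (Fin (n + 2)), T ‖y‖ =
      ∫⁻ y in farCone (EuclideanSpace.single (0 : Fin (n + 2)) (1 : ℝ)) (Real.cos 0), T ‖y‖ := by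
    rw [Real.cos_zero, farCone_one (by simp), setLIntegral_univ]
  have hdiff : g (n + 2) Real.pi - g (n + 2) φ = K * ∫ θ in φ..Real.pi, Real.sin θ ^ n := by
    rw [hg, hg, ← mul_sub, intervalIntegral.integral_interval_sub_left
      (intervalIntegrable_sin_pow n _ _) (intervalIntegrable_sin_pow n _ _)]
  rw [hdiff, hg, hwhole, setLIntegral_farCone_cos n hT hφ,
    setLIntegral_farCone_cos n hT (Set.left_mem_Icc.2 Real.pi_pos.le), ENNReal.ofReal_mul hK.le,
    ENNReal.ofReal_mul hK.le]
  ring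

lemma natCast_mul_setLIntegral_farCone (n : ℕ) {M : ℕ} (hM : M ≠ 0) {φ : ℝ}
    (hφ : φ ∈ Set.Icc 0 Real.pi)
    (hgφ : g (n + 2) φ = ((M : ℝ) - 1) / M * unitSphereArea (n + 2)) {T : ℝ → ℝ≥0∞}
    (hT : Measurable T) :
    M * ∫⁻ y in farCone (EuclideanSpace.single (0 : Fin (n + 2)) (1 : ℝ)) (Real.cos φ), T ‖y‖ =
      ∫⁻ y : EuclideanSpace ℝ (Fin (n + 2)), T ‖y‖ := by
  have hpos := unitSphereArea_pos (N := n + 2) (by simp)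
  have hcap : unitSphereArea (n + 2) = M * (g (n + 2) Real.pi - g (n + 2) φ) := by
    rw [hgφ, g_pi]
    field_simp
    ring
  refine (ENNReal.mul_right_inj (ENNReal.ofReal_pos.2 hpos).ne' ENNReal.ofReal_ne_top).1 ?_
  rw [mul_left_comm, ← g_pi, ofReal_g_pi_mul_setLIntegral_farCone n hT hφ, ← mul_assoc,
    ← ENNReal.ofReal_natCast, ← ENNReal.ofReal_mul M.cast_nonneg, ← hcap, g_pi]

end SolidAngle

section GaussianNoise

variable {N : ℕ} {v : NNReal}

/-- The density of `N` independent centred Gaussians of variance `v`, as a function of the squared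
Euclidean norm. -/
noncomputable def gaussianDensityOfNormSq (N : ℕ) (v : NNReal) (s : ℝ) : ℝ≥0∞ :=
  ENNReal.ofReal ((√(2 * Real.pi * v))⁻¹ ^ N * Real.exp (-s / (2 * v)))

lemma antitone_gaussianDensityOfNormSq (N : ℕ) (v : NNReal) :
    Antitone (gaussianDensityOfNormSq N v) := fun s t hst => by
  unfold gaussianDensityOfNormSq
  gcongr

lemma gaussianDensityOfNormSq_norm_sq (v : NNReal) (y : EuclideanSpace ℝ (Fin N)) :
    gaussianDensityOfNormSq N v (‖y‖ ^ 2) = ENNReal.ofReal (∏ i, gaussianPDFReal 0 v (y i)) := by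
  simp only [gaussianDensityOfNormSq, gaussianPDFReal, Finset.prod_mul_distrib, Finset.prod_const,
    Finset.card_univ, Fintype.card_fin, ← Real.exp_sum, sub_zero, ← Finset.sum_div,
    Finset.sum_neg_distrib, EuclideanSpace.norm_sq_eq, Real.norm_eq_abs, sq_abs]

lemma pi_gaussianReal_eq_withDensity (hv : v ≠ 0) :
    (Measure.pi fun _ : Fin N => gaussianReal 0 v) =
      (volume : Measure (Fin N → ℝ)).withDensity
        fun z => ENNReal.ofReal (∏ i, gaussianPDFReal 0 v (z i)) := by
  have hnonneg (s : Set (Fin N → ℝ)) :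
      0 ≤ᵐ[volume.restrict s] fun z => ∏ i, gaussianPDFReal 0 v (z i) :=
    ae_of_all _ fun z => Finset.prod_nonneg fun i _ => gaussianPDFReal_nonneg _ _ _
  refine Measure.pi_eq fun s hs => ?_
  rw [withDensity_apply _ (MeasurableSet.univ_pi hs),
    ← ofReal_integral_eq_lintegral_ofReal ?_ (hnonneg _), volume_pi, Measure.restrict_pi_pi,
    integral_fintype_prod_eq_prod (𝕜 := ℝ) (E := fun _ : Fin N => ℝ)
      (f := fun _ x => gaussianPDFReal 0 v x), ENNReal.ofReal_prod_of_nonneg fun i _ =>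
      integral_nonneg fun x => gaussianPDFReal_nonneg _ _ _]
  · exact Finset.prod_congr rfl fun i _ => (gaussianReal_apply_eq_integral 0 hv (s i)).symm
  · rw [volume_pi, Measure.restrict_pi_pi]
    exact Integrable.fintype_prod (f := fun (_ : Fin N) x => gaussianPDFReal 0 v x)
      fun i => (integrable_gaussianPDFReal 0 v).restrict

lemma pi_gaussianReal_add_mem (hv : v ≠ 0) (x : EuclideanSpace ℝ (Fin N))
    {D : Set (EuclideanSpace ℝ (Fin N))} (hD : MeasurableSet D) :
    (Measure.pi fun _ : Fin N => gaussianReal 0 v) {z | x + WithLp.toLp 2 z ∈ D} =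
      ∫⁻ y in D, gaussianDensityOfNormSq N v (‖y - x‖ ^ 2) := by
  have hshift : MeasurableSet {z : Fin N → ℝ | x + WithLp.toLp 2 z ∈ D} :=
    (by fun_prop : Measurable fun z : Fin N → ℝ => x + WithLp.toLp 2 z) hD
  rw [pi_gaussianReal_eq_withDensity hv, withDensity_apply _ hshift, ← lintegral_indicator hshift,
    ← lintegral_indicator hD,
    ← lintegral_add_left_eq_self (μ := (volume : Measure (EuclideanSpace ℝ (Fin N)))) _ x,
    ← (PiLp.volume_preserving_toLp (Fin N)).lintegral_comp_emb
      (MeasurableEquiv.toLp 2 (Fin N → ℝ)).measurableEmbedding]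
  refine lintegral_congr fun z => ?_
  change _ = D.indicator _ (x + WithLp.toLp 2 z)
  by_cases h : x + WithLp.toLp 2 z ∈ D
  · rw [Set.indicator_of_mem h, Set.indicator_of_mem (by exact h), add_sub_cancel_left,
      gaussianDensityOfNormSq_norm_sq]
  · rw [Set.indicator_of_notMem h, Set.indicator_of_notMem (by exact h)]

lemma lintegral_gaussianDensityOfNormSq (hv : v ≠ 0) :
    ∫⁻ y : EuclideanSpace ℝ (Fin N), gaussianDensityOfNormSq N v (‖y‖ ^ 2) = 1 := by
  simpa using (pi_gaussianReal_add_mem (N := N) hv 0 MeasurableSet.univ).symm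

lemma pi_gaussianReal_map_sqrt_smul (N : ℕ) (v : NNReal) :
    (Measure.pi fun _ : Fin N => gaussianReal 0 1).map (fun z => √(v : ℝ) • z) =
      Measure.pi fun _ => gaussianReal 0 v := by
  have hcoord : (gaussianReal 0 1).map (fun x => √(v : ℝ) * x) = gaussianReal 0 v := by
    rw [gaussianReal_map_const_mul, mul_zero, mul_one]
    congr 1
    exact NNReal.eq (Real.sq_sqrt v.2)
  rw [← hcoord]
  exact Measure.pi_map_pi (f := fun _ x => √(v : ℝ) * x) fun _ => by fun_prop

lemma smul_mem_farCone_iff {E : Type*} [NormedAddCommGroup E] [InnerProductSpace ℝ E] {r : ℝ}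
    (hr : 0 < r) {u y : E} {c : ℝ} : r • y ∈ farCone u c ↔ y ∈ farCone u c := by
  simp only [farCone, Set.mem_ofPred_eq, inner_smul_right, norm_smul, Real.norm_of_nonneg hr.le,
    mul_left_comm c r, mul_le_mul_iff_right₀ hr]

lemma pi_gaussianReal_sqrt_smul_add_mem_farCone (hv : v ≠ 0) (x u : EuclideanSpace ℝ (Fin N))
    (c : ℝ) :
    (Measure.pi fun _ : Fin N => gaussianReal 0 v)
        {z | √(v : ℝ) • x + WithLp.toLp 2 z ∈ farCone u c} =
      (Measure.pi fun _ : Fin N => gaussianReal 0 1) {z | x + WithLp.toLp 2 z ∈ farCone u c} := by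
  have hσ : 0 < √(v : ℝ) := Real.sqrt_pos.2 (NNReal.coe_pos.2 (pos_iff_ne_zero.2 hv))
  have hset : MeasurableSet {z : Fin N → ℝ | √(v : ℝ) • x + WithLp.toLp 2 z ∈ farCone u c} :=
    (by fun_prop : Measurable fun z : Fin N → ℝ => √(v : ℝ) • x + WithLp.toLp 2 z)
      (measurableSet_farCone u c)
  rw [← pi_gaussianReal_map_sqrt_smul, Measure.map_apply (by fun_prop) hset]
  congr 1
  ext z
  simp only [Set.mem_preimage, Set.mem_ofPred_eq, WithLp.toLp_smul, ← smul_add,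
    smul_mem_farCone_iff hσ]

theorem natCast_mul_pi_gaussianReal_farCone_le_sum {n M : ℕ} {φ : ℝ}
    (hφ : φ ∈ Set.Icc (Real.pi / 2) Real.pi)
    (hgφ : g (n + 2) φ = ((M : ℝ) - 1) / M * unitSphereArea (n + 2)) (hv : v ≠ 0) {a : ℝ}
    (ha : 0 ≤ a) {x : Fin M → EuclideanSpace ℝ (Fin (n + 2))} (hx : ∀ k, ‖x k‖ ≤ a)
    {κ : EuclideanSpace ℝ (Fin (n + 2)) → Fin M} (hκ : Measurable κ) :
    M * (Measure.pi fun _ : Fin (n + 2) => gaussianReal 0 v)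
        {z | a • EuclideanSpace.single 0 1 + WithLp.toLp 2 z ∈
          farCone (EuclideanSpace.single 0 1) (Real.cos φ)} ≤
      ∑ k, (Measure.pi fun _ : Fin (n + 2) => gaussianReal 0 v)
        {z | κ (x k + WithLp.toLp 2 z) = k} := by
  have hM : M ≠ 0 := (κ 0).pos.ne'
  have hcos : Real.cos φ ≤ 0 :=
    Real.cos_nonpos_of_pi_div_two_le_of_le hφ.1 (by linarith [hφ.2, Real.pi_pos])
  have hφ0 : φ ∈ Set.Icc 0 Real.pi := Set.Icc_subset_Icc_left Real.pi_div_two_pos.le hφ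
  have packing := card_mul_setLIntegral_farCone_le_sum
    (antitone_gaussianDensityOfNormSq (n + 2) v)
    ((lintegral_gaussianDensityOfNormSq hv).trans_ne ENNReal.one_ne_top)
    (e := EuclideanSpace.single 0 1) (by simp) ha hcos (ι := Fin M)
    (fun T hT => by
      simpa using (natCast_mul_setLIntegral_farCone n hM hφ0 hgφ hT).le) hx hκ
  simpa only [Fintype.card_fin, ← pi_gaussianReal_add_mem hv _ (measurableSet_farCone _ _),
    ← pi_gaussianReal_add_mem hv _ (hκ (measurableSet_singleton _)), Set.mem_preimage,
    Set.mem_singleton_iff] using packing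

end GaussianNoise

section Phi

lemma arccot_mem_Ioo (x : ℝ) : arccot x ∈ Set.Ioo 0 Real.pi := by
  unfold arccot
  constructor <;> linarith [Real.arctan_lt_pi_div_two x, Real.neg_pi_div_two_lt_arctan x]

lemma cos_arccot (x : ℝ) : Real.cos (arccot x) = x / √(1 + x ^ 2) := by
  rw [arccot, Real.cos_pi_div_two_sub, Real.sin_arctan]

lemma cos_arccot_div_sqrt_mul_sqrt (b : ℝ) {s : ℝ} (hs : 0 < s) :
    Real.cos (arccot (b / √s)) * √(b ^ 2 + s) = b := by
  have hroot : √(1 + (b / √s) ^ 2) = √(b ^ 2 + s) / √s := by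
    rw [← Real.sqrt_div (by positivity), div_pow, Real.sq_sqrt hs.le, add_div, div_self hs.ne',
      add_comm]
  have hnorm : √(b ^ 2 + s) ≠ 0 := (Real.sqrt_pos.2 (by positivity)).ne'
  rw [cos_arccot, hroot, div_div_div_cancel_right₀ (Real.sqrt_pos.2 hs).ne',
    div_mul_cancel₀ _ hnorm]

lemma norm_smul_single_add_toLp {N : ℕ} [NeZero N] (a : ℝ) (z : Fin N → ℝ) :
    ‖a • EuclideanSpace.single (0 : Fin N) (1 : ℝ) + WithLp.toLp 2 z‖ =
      √((a + z 0) ^ 2 + ∑ l ∈ Finset.univ.erase 0, z l ^ 2) := by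
  rw [EuclideanSpace.norm_eq, ← Finset.add_sum_erase _ _ (Finset.mem_univ (0 : Fin N))]
  congr 2
  · simp
  · exact Finset.sum_congr rfl fun l hl => by simp [Finset.ne_of_mem_erase hl]

lemma Phi_mem_Icc (N : ℕ) [NeZero N] (γ : ℝ) (z : Fin N → ℝ) : Phi N γ z ∈ Set.Icc 0 Real.pi := by
  unfold Phi
  split_ifs
  · exact Set.Ioo_subset_Icc_self (arccot_mem_Ioo _)
  · exact Set.left_mem_Icc.2 Real.pi_pos.le

lemma cos_Phi_mul_norm {N : ℕ} [NeZero N] {γ : ℝ} {z : Fin N → ℝ} (h : 0 < Phi N γ z) :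
    Real.cos (Phi N γ z) *
        ‖√(N * γ) • EuclideanSpace.single (0 : Fin N) (1 : ℝ) + WithLp.toLp 2 z‖ =
      √(N * γ) + z 0 := by
  have htail : 0 < ∑ l ∈ Finset.univ.erase (0 : Fin N), z l ^ 2 := by
    by_contra htail
    exact h.ne' (if_neg htail)
  rw [norm_smul_single_add_toLp, Phi, if_pos htail, cos_arccot_div_sqrt_mul_sqrt _ htail]

lemma mem_farCone_of_le_Phi {N : ℕ} [NeZero N] {γ φ : ℝ} (hφ : 0 < φ) {z : Fin N → ℝ}
    (h : φ ≤ Phi N γ z) :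
    √(N * γ) • EuclideanSpace.single 0 1 + WithLp.toLp 2 z ∈
      farCone (EuclideanSpace.single (0 : Fin N) (1 : ℝ)) (Real.cos φ) := by
  have hcos : Real.cos (Phi N γ z) ≤ Real.cos φ :=
    Real.cos_le_cos_of_nonneg_of_le_pi hφ.le (Phi_mem_Icc N γ z).2 h
  rw [farCone, Set.mem_ofPred_eq, inner_single_zero_one]
  calc _ = √(N * γ) + z 0 := by simp
    _ = Real.cos (Phi N γ z) * _ := (cos_Phi_mul_norm (hφ.trans_le h)).symm
    _ ≤ Real.cos φ * _ := mul_le_mul_of_nonneg_right hcos (norm_nonneg _)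

theorem Qfun_g_le (n : ℕ) (γ : ℝ) {φ : ℝ} (hφ : φ ∈ Set.Ioc 0 Real.pi) :
    Qfun (g (n + 2) φ) (n + 2) γ ≤
      ((Measure.pi fun _ : Fin (n + 2) => gaussianReal 0 1)
        {z | √((n + 2 : ℕ) * γ) • EuclideanSpace.single 0 1 + WithLp.toLp 2 z ∈
          farCone (EuclideanSpace.single 0 1) (Real.cos φ)}).toReal := by
  refine ENNReal.toReal_mono (measure_ne_top _ _) (measure_mono fun z hz => ?_)
  exact mem_farCone_of_le_Phi hφ.1
    (((strictMonoOn_g n).le_iff_le (Set.Ioc_subset_Icc_self hφ) (Phi_mem_Icc _ _ _)).1 hz)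

lemma Qfun_one_eq_zero {x : ℝ} (hx : 0 < x) (γ : ℝ) : Qfun x 1 γ = 0 := by
  simp [Qfun, g, hx.not_ge]

end Phi

section Hop

variable {N M : ℕ}

lemma hopMatrix_mem_rowStochastic (enc : Fin M → Fin N → ℝ) {dec : (Fin N → ℝ) → Fin M}
    (hdec : Measurable dec) (v : NNReal) :
    hopMatrix enc dec v ∈ Matrix.rowStochastic ℝ (Fin M) := by
  refine Matrix.mem_rowStochastic_iff_sum.2 ⟨fun j k => ENNReal.toReal_nonneg, fun j => ?_⟩
  have hrecv : Measurable fun z : Fin N → ℝ => dec (fun t => enc j t + z t) :=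
    hdec.comp (by fun_prop)
  have htotal := sum_measure_preimage_singleton (μ := Measure.pi fun _ : Fin N => gaussianReal 0 v)
    Finset.univ fun k _ => hrecv (measurableSet_singleton k)
  rw [Finset.coe_univ, Set.preimage_univ, measure_univ] at htotal
  simp only [hopMatrix]
  rw [← ENNReal.toReal_sum fun k _ => measure_ne_top _ _]
  exact congrArg ENNReal.toReal htotal

lemma norm_toLp_le_sqrt {x : Fin N → ℝ} {s : ℝ} (hx : ∑ t, x t ^ 2 ≤ s) :
    ‖WithLp.toLp 2 x‖ ≤ √s := by
  simpa only [EuclideanSpace.norm_eq, Real.norm_eq_abs, sq_abs] using Real.sqrt_le_sqrt hx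

lemma mul_Qfun_le_sum_hopMatrix {n : ℕ} {γ : ℝ} {v : NNReal} (hM : 2 ≤ M) (hv : v ≠ 0)
    {enc : Fin M → Fin (n + 2) → ℝ} (henc : ∀ j, ∑ t, enc j t ^ 2 ≤ (n + 2 : ℕ) * (γ * v))
    {dec : (Fin (n + 2) → ℝ) → Fin M} (hdec : Measurable dec) (f : Fin M → Fin M) :
    M * Qfun (((M : ℝ) - 1) / M * unitSphereArea (n + 2)) (n + 2) γ ≤
      ∑ k, hopMatrix enc dec v (f k) k := by
  obtain ⟨φ, hφ, hgφ⟩ := exists_g_eq_one_sub_inv_mul n hM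
  have hφ0 : φ ∈ Set.Ioc 0 Real.pi := ⟨Real.pi_div_two_pos.trans_le hφ.1, hφ.2⟩
  have hnorm (k : Fin M) : ‖WithLp.toLp 2 (enc (f k))‖ ≤ √(v : ℝ) * √((n + 2 : ℕ) * γ) := by
    rw [← Real.sqrt_mul v.coe_nonneg]
    exact norm_toLp_le_sqrt ((henc (f k)).trans_eq (by ring))
  have hpack := natCast_mul_pi_gaussianReal_farCone_le_sum hφ hgφ hv (by positivity) hnorm
    (κ := fun y => dec (WithLp.ofLp y)) (hdec.comp (by fun_prop))
  simp only [← smul_smul] at hpack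
  rw [pi_gaussianReal_sqrt_smul_add_mem_farCone hv] at hpack
  have hreal := ENNReal.toReal_mono (ENNReal.sum_ne_top.2 fun k _ => measure_ne_top _ _) hpack
  rw [ENNReal.toReal_mul, ENNReal.toReal_natCast,
    ENNReal.toReal_sum fun k _ => measure_ne_top _ _] at hreal
  rw [← hgφ]
  exact (mul_le_mul_of_nonneg_left (Qfun_g_le n γ hφ0) M.cast_nonneg).trans hreal

theorem mul_Qfun_le_doeblinCoeff_hopMatrix [NeZero N] {γ : ℝ} {v : NNReal} (hM : 2 ≤ M)
    (hv : v ≠ 0) {enc : Fin M → Fin N → ℝ} (henc : ∀ j, ∑ t, enc j t ^ 2 ≤ N * (γ * v))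
    {dec : (Fin N → ℝ) → Fin M} (hdec : Measurable dec) :
    M * Qfun (((M : ℝ) - 1) / M * unitSphereArea N) N γ ≤ doeblinCoeff (hopMatrix enc dec v) := by
  have : NeZero M := ⟨by omega⟩
  obtain ⟨f, hf⟩ := exists_sum_apply_eq_doeblinCoeff (hopMatrix enc dec v)
  rw [← hf]
  obtain rfl | hN := eq_or_ne N 1
  · have hangle : 0 < ((M : ℝ) - 1) / M * unitSphereArea 1 := by
      have : (2 : ℝ) ≤ M := by exact_mod_cast hM
      exact mul_pos (div_pos (by linarith) (by linarith)) (unitSphereArea_pos one_ne_zero)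
    rw [Qfun_one_eq_zero hangle, mul_zero]
    exact Finset.sum_nonneg fun k _ => ENNReal.toReal_nonneg
  · obtain ⟨n, rfl⟩ : ∃ n, N = n + 2 := ⟨N - 2, by have := NeZero.ne N; omega⟩
    exact mul_Qfun_le_sum_hopMatrix hM hv henc hdec f

lemma mul_Qfun_le_one [NeZero N] {γ : ℝ} (hM : 2 ≤ M) (hγ : 0 ≤ γ) :
    M * Qfun (((M : ℝ) - 1) / M * unitSphereArea N) N γ ≤ 1 := by
  have : NeZero M := ⟨by omega⟩
  have hdec : Measurable fun _ : Fin N → ℝ => (0 : Fin M) := measurable_const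
  calc _ ≤ doeblinCoeff (hopMatrix 0 (fun _ : Fin N → ℝ => (0 : Fin M)) 1) :=
        mul_Qfun_le_doeblinCoeff_hopMatrix hM one_ne_zero (fun j => by simpa using by positivity)
          hdec
    _ ≤ 1 := doeblinCoeff_le_one
        (Matrix.mem_rowStochastic_iff_sum.1 (hopMatrix_mem_rowStochastic 0 hdec 1)).2

end Hop

theorem stmt_18_general {N n M : ℕ} [NeZero N] (hM : 2 ≤ M) {γ : ℝ} {v : Fin n → NNReal}
    (hv : ∀ i, v i ≠ 0) {enc : Fin n → Fin M → Fin N → ℝ}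
    (henc : ∀ i j, ∑ t, enc i j t ^ 2 ≤ N * (γ * v i)) {dec : Fin n → (Fin N → ℝ) → Fin M}
    (hdec : ∀ i, Measurable (dec i)) {p : Fin M → ℝ} (hp0 : ∀ j, 0 ≤ p j) (hp1 : ∑ j, p j = 1) :
    mutualInfo p (List.ofFn fun i => hopMatrix (enc i) (dec i) (v i)).prod ≤
      Real.log M * (1 - M * Qfun (((M : ℝ) - 1) / M * unitSphereArea N) N γ) ^ n := by
  have : NeZero M := ⟨by omega⟩
  have hcontract := mutualInfo_list_prod_le hp0 hp1
    (List.ofFn fun i => hopMatrix (enc i) (dec i) (v i))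
    (List.forall_mem_ofFn_iff.2 fun i => hopMatrix_mem_rowStochastic (enc i) (hdec i) (v i))
    (List.forall_mem_ofFn_iff.2 fun i =>
      mul_Qfun_le_doeblinCoeff_hopMatrix hM (hv i) (henc i) (hdec i))
  rwa [List.length_ofFn, mul_comm] at hcontract

theorem stmt_18 (N n M : ℕ) [NeZero N] [NeZero M] (R : ℝ) (hR : 0 < R)
    (hM : (M : ℝ) = 2 ^ ((N : ℝ) * R))
    (P0 : ℝ) (hP0 : 0 < P0) (σ0 : ℝ) (hσ0 : 0 < σ0)
    (σ : Fin n → ℝ) (hσ : ∀ i, σ0 ≤ σ i)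
    (enc : Fin n → Fin M → Fin N → ℝ)
    (hpow : ∀ i j, ∑ t, enc i j t ^ 2 ≤ N * P0)
    (dec : Fin n → (Fin N → ℝ) → Fin M)
    (hdec : ∀ i, Measurable (dec i))
    (p : Fin M → ℝ) (hp0 : ∀ j, 0 ≤ p j) (hp1 : ∑ j, p j = 1) :
    mutualInfo p
        (List.ofFn fun i : Fin n =>
          hopMatrix (enc i) (dec i) ⟨σ i ^ 2, sq_nonneg _⟩).prod ≤
      N * R *
        (1 - M * Qfun (((M : ℝ) - 1) / M *
            (2 * Real.pi ^ ((N : ℝ) / 2) / Real.Gamma ((N : ℝ) / 2))) N (P0 / σ0 ^ 2)) ^ n := by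
  have hNR : 0 < (N : ℝ) * R := mul_pos (Nat.cast_pos.2 (NeZero.pos N)) hR
  have hM2 : 2 ≤ M := by
    have hM1 : (1 : ℝ) < M := hM ▸ Real.one_lt_rpow one_lt_two hNR
    exact_mod_cast hM1
  have hlog : Real.log M ≤ N * R := by
    rw [hM, Real.log_rpow two_pos]
    exact mul_le_of_le_one_right hNR.le (by linarith [Real.log_two_lt_d9])
  have hσpos (i : Fin n) : 0 < σ i := hσ0.trans_le (hσ i)
  have hsnr (i : Fin n) (j : Fin M) : ∑ t, enc i j t ^ 2 ≤ N * (P0 / σ0 ^ 2 * σ i ^ 2) := by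
    refine (hpow i j).trans (mul_le_mul_of_nonneg_left ?_ N.cast_nonneg)
    rw [div_mul_eq_mul_div, le_div_iff₀ (pow_pos hσ0 2)]
    exact mul_le_mul_of_nonneg_left (pow_le_pow_left₀ hσ0.le (hσ i) 2) hP0.le
  refine (stmt_18_general hM2 (v := fun i => ⟨σ i ^ 2, sq_nonneg _⟩)
    (fun i => ne_of_gt (show 0 < σ i ^ 2 from pow_pos (hσpos i) 2)) hsnr hdec hp0 hp1).trans ?_
  exact mul_le_mul_of_nonneg_right hlog
    (pow_nonneg (sub_nonneg.2 (mul_Qfun_le_one hM2 (by positivity))) n)
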